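/- arXiv:2403.00654 — 2 statements merged into one kernel-verified Lean document; each statement's English description precedes it below -/
import Mathlib

section
/- For every subset S of a topological space (X, τ), Pint_δ(Pcl_δ(S)) = Pcl_δ(S) ∩ int(cl_δ(S)), where int denotes topological interior. -/
open Set

variable {X : Type*}

/-- The δ-closure of a set `S`: points `x` such that every open set `A` containing `x`
satisfies `S ∩ interior (closure A) ≠ ∅`. -/
def deltaCl [TopologicalSpace X] (S : Set X) : Set X :=
  {x | ∀ A : Set X, IsOpen A → x ∈ A → (S ∩ interior (closure A)).Nonempty}

/-- The δ-interior of `S` is the complement of the δ-closure of the complement. -/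
def deltaInt [TopologicalSpace X] (S : Set X) : Set X := (deltaCl Sᶜ)ᶜ

/-- `S` is δP-open if `S ⊆ int (cl_δ S)`. -/
def DeltaPOpen [TopologicalSpace X] (S : Set X) : Prop := S ⊆ interior (deltaCl S)

/-- `S` is δP-closed if its complement is δP-open. -/
def DeltaPClosed [TopologicalSpace X] (S : Set X) : Prop := DeltaPOpen Sᶜ

/-- The δP-closure / δP-upper approximation of `S`:
the intersection of all δP-closed sets containing `S`. -/
def PclDelta [TopologicalSpace X] (S : Set X) : Set X := ⋂₀ {W | DeltaPClosed W ∧ S ⊆ W}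

/-- The δP-interior / δP-lower approximation of `S`:
the union of all δP-open sets contained in `S`. -/
def PintDelta [TopologicalSpace X] (S : Set X) : Set X := ⋃₀ {V | DeltaPOpen V ∧ V ⊆ S}

/-- `S` is preopen if `S ⊆ int (cl S)`. -/
def PreOpen [TopologicalSpace X] (S : Set X) : Prop := S ⊆ interior (closure S)

/-- `S` is preclosed if its complement is preopen. -/
def PreClosed [TopologicalSpace X] (S : Set X) : Prop := PreOpen Sᶜ

/-- The P-lower approximation of `S`: the union of all preopen sets contained in `S`. -/
def PLower [TopologicalSpace X] (S : Set X) : Set X := ⋃₀ {V | PreOpen V ∧ V ⊆ S}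

/-- The P-upper approximation of `S`: the intersection of all preclosed sets containing `S`. -/
def PUpper [TopologicalSpace X] (S : Set X) : Set X := ⋂₀ {W | PreClosed W ∧ S ⊆ W}

/-!
The set `int (cl_δ S)` is regular open, so each of its points, being δ-adherent to `S`, is still
δ-adherent to `S ∩ int (cl_δ S)`. Hence `S ∩ int (cl_δ S)` is the largest δP-open subset of `S`.
As `Pcl_δ S` lies between `S` and `cl_δ S`, the two have the same δ-closure.
-/

section

variable [TopologicalSpace X] {S T U : Set X}

lemma deltaCl_mono (h : S ⊆ T) : deltaCl S ⊆ deltaCl T :=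
  fun _ hx A hA hxA => (hx A hA hxA).mono (inter_subset_inter_left _ h)

lemma subset_deltaCl (S : Set X) : S ⊆ deltaCl S :=
  fun x hx _ hA hxA => ⟨x, hx, hA.subset_interior_closure hxA⟩

lemma isClosed_deltaCl (S : Set X) : IsClosed (deltaCl S) := by
  refine isClosed_of_closure_subset fun x hx A hA hxA => ?_
  obtain ⟨y, hyA, hyS⟩ := mem_closure_iff.1 hx A hA hxA
  exact hyS A hA hyA

lemma deltaCl_deltaCl (S : Set X) : deltaCl (deltaCl S) = deltaCl S := by
  refine Subset.antisymm (fun x hx A hA hxA => ?_) (subset_deltaCl _)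
  obtain ⟨y, hyS, hyA⟩ := hx A hA hxA
  simpa only [interior_closure_idem] using hyS _ isOpen_interior hyA

lemma deltaCl_inter_subset_of_isOpen (hU : IsOpen U) :
    deltaCl S ∩ U ⊆ deltaCl (S ∩ interior (closure U)) := by
  rintro x ⟨hxS, hxU⟩ A hA hxA
  obtain ⟨y, hyS, hyAU⟩ := hxS (A ∩ U) (hA.inter hU) ⟨hxA, hxU⟩
  have hyA : y ∈ interior (closure A) := interior_mono (closure_mono inter_subset_left) hyAU
  have hyU : y ∈ interior (closure U) := interior_mono (closure_mono inter_subset_right) hyAU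
  exact ⟨y, ⟨hyS, hyU⟩, hyA⟩

lemma interior_closure_interior_of_isClosed (hS : IsClosed S) :
    interior (closure (interior S)) = interior S := by
  simpa only [hS.closure_eq] using interior_closure_idem (s := S)

lemma deltaPOpen_of_isOpen (hU : IsOpen U) : DeltaPOpen U :=
  interior_maximal (subset_deltaCl U) hU

lemma deltaPOpen_inter_interior_deltaCl (S : Set X) :
    DeltaPOpen (S ∩ interior (deltaCl S)) := by
  have h : interior (deltaCl S) ⊆ deltaCl (S ∩ interior (deltaCl S)) :=
    calc
      interior (deltaCl S) = deltaCl S ∩ interior (deltaCl S) :=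
        (inter_eq_right.2 interior_subset).symm
      _ ⊆ deltaCl (S ∩ interior (closure (interior (deltaCl S)))) :=
        deltaCl_inter_subset_of_isOpen isOpen_interior
      _ = deltaCl (S ∩ interior (deltaCl S)) := by
        rw [interior_closure_interior_of_isClosed (isClosed_deltaCl S)]
  exact inter_subset_right.trans (interior_maximal h isOpen_interior)

lemma pintDelta_eq_inter_interior_deltaCl (S : Set X) :
    PintDelta S = S ∩ interior (deltaCl S) := by
  apply Subset.antisymm
  · exact sUnion_subset fun V ⟨hV, hVS⟩ =>
      subset_inter hVS (hV.trans (interior_mono (deltaCl_mono hVS)))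
  · exact subset_sUnion_of_mem ⟨deltaPOpen_inter_interior_deltaCl S, inter_subset_left⟩

lemma subset_pclDelta (S : Set X) : S ⊆ PclDelta S :=
  subset_sInter fun _ hW => hW.2

lemma pclDelta_subset_deltaCl (S : Set X) : PclDelta S ⊆ deltaCl S :=
  sInter_subset_of_mem
    ⟨deltaPOpen_of_isOpen (isClosed_deltaCl S).isOpen_compl, subset_deltaCl S⟩

lemma deltaCl_pclDelta (S : Set X) : deltaCl (PclDelta S) = deltaCl S :=
  Subset.antisymm
    ((deltaCl_mono (pclDelta_subset_deltaCl S)).trans_eq (deltaCl_deltaCl S))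
    (deltaCl_mono (subset_pclDelta S))

end

theorem pintDelta_pclDelta [TopologicalSpace X] (S : Set X) :
    PintDelta (PclDelta S) = PclDelta S ∩ interior (deltaCl S) := by
  rw [pintDelta_eq_inter_interior_deltaCl, deltaCl_pclDelta]
end

section
/- Let (X, τ) be a topological space in which every δP-open subset of X is δP-closed. Then for all c, d ∈ X, either U_δP({c}) = U_δP({d}) or U_δP({c}) ∩ U_δP({d}) = ∅; hence the family of sets {U_δP({c}) : c ∈ X} forms a partition of X. -/
open Set

variable {X : Type*}

/-!
A singleton `{x}` is either open or has dense complement. In the second case `{x}ᶜ` is preopen,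
hence δP-open, so `{x}` is δP-closed; in the first case `{x}` is δP-open, and the hypothesis makes
it δP-closed. The upper approximation of a point is therefore the point itself, and the partition
is the one into singletons.
-/

section

variable [TopologicalSpace X] {S : Set X}

theorem closure_subset_deltaCl (S : Set X) : closure S ⊆ deltaCl S := by
  intro x hx A hA hxA
  have hAS : (A ∩ S).Nonempty := mem_closure_iff.mp hx A hA hxA
  rw [inter_comm] at hAS
  exact hAS.mono (inter_subset_inter_right S hA.subset_interior_closure)

theorem PreOpen.deltaPOpen (hS : PreOpen S) : DeltaPOpen S :=
  hS.trans (interior_mono (closure_subset_deltaCl S))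

theorem preOpen_of_isOpen (hS : IsOpen S) : PreOpen S :=
  hS.subset_interior_closure

theorem preOpen_of_dense (hS : Dense S) : PreOpen S := by
  rw [PreOpen, hS.closure_eq, interior_univ]
  exact subset_univ S

theorem DeltaPClosed.pclDelta_eq (hS : DeltaPClosed S) : PclDelta S = S :=
  Subset.antisymm (sInter_subset_of_mem ⟨hS, Subset.rfl⟩) (subset_sInter fun _ hW => hW.2)

theorem deltaPClosed_singleton_of_not_isOpen {x : X} (hx : ¬IsOpen ({x} : Set X)) :
    DeltaPClosed ({x} : Set X) :=
  (preOpen_of_dense (dense_compl_singleton_iff_not_open.mpr hx)).deltaPOpen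

theorem pclDelta_singleton {x : X} (h : IsOpen ({x} : Set X) → DeltaPClosed ({x} : Set X)) :
    PclDelta ({x} : Set X) = {x} := by
  by_cases hx : IsOpen ({x} : Set X)
  · exact (h hx).pclDelta_eq
  · exact (deltaPClosed_singleton_of_not_isOpen hx).pclDelta_eq

theorem deltaP_upper_singleton_partition_general
    (h : ∀ x : X, IsOpen ({x} : Set X) → DeltaPClosed ({x} : Set X)) :
    (∀ c d : X, PclDelta ({c} : Set X) = PclDelta ({d} : Set X) ∨
        PclDelta ({c} : Set X) ∩ PclDelta ({d} : Set X) = ∅) ∧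
      Setoid.IsPartition {T : Set X | ∃ c : X, T = PclDelta ({c} : Set X)} := by
  have pcl_eq (c : X) : PclDelta ({c} : Set X) = {c} := pclDelta_singleton (h c)
  simp only [pcl_eq]
  refine ⟨fun c d => ?_, Setoid.isPartition_classes ⊥⟩
  obtain rfl | hcd := eq_or_ne c d
  · exact Or.inl rfl
  · exact Or.inr (disjoint_singleton.mpr hcd).inter_eq

end

theorem deltaP_upper_singleton_partition [TopologicalSpace X]
    (h : ∀ S : Set X, DeltaPOpen S → DeltaPClosed S) :
    (∀ c d : X, PclDelta ({c} : Set X) = PclDelta ({d} : Set X) ∨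
        PclDelta ({c} : Set X) ∩ PclDelta ({d} : Set X) = ∅) ∧
      Setoid.IsPartition {T : Set X | ∃ c : X, T = PclDelta ({c} : Set X)} :=
  deltaP_upper_singleton_partition_general fun x hx =>
    h {x} (preOpen_of_isOpen hx).deltaPOpen
end
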